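/- arXiv:1909.10397 — 4 statements merged into one kernel-verified Lean document; each statement's English description precedes it below -/
import Mathlib

section
/- The integral I := ∫₀¹ ∫₀¹ ∫_ℝ ∫_ℝ p_{1−s}(y)² p_{1−s′}(y′)² · (2π)^{−1} ( s s′ |y| |y′| − (min(s,s′))² (min(|y|,|y′|))² 𝟙_{y y′ > 0} )^{−1/2} dy dy′ ds ds′ is finite. (Here the integrand is defined for almost every (s, y, s′, y′), namely whenever the expression inside the power is strictly positive.) -/
open MeasureTheory Filter Set

/-- The one-dimensional heat kernel `p_t(x) = (2πt)^{-1/2} exp(-x²/(2t))`. -/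
noncomputable def heatKernel (t x : ℝ) : ℝ :=
  (2 * Real.pi * t) ^ (-(1:ℝ)/2) * Real.exp (-x ^ 2 / (2 * t))

open scoped ENNReal

lemma lintegral_Ioo_abs_rpow_neg_half_le {r : ℝ} (hr : 0 < r) :
    ∫⁻ u in Ioo (-r) r, ENNReal.ofReal (|u| ^ (-(1:ℝ)/2)) ≤ ENNReal.ofReal (4 * r ^ ((1:ℝ)/2)) := by
  have hpos : ∫⁻ u in Ioc 0 r, ENNReal.ofReal (|u| ^ (-(1:ℝ)/2))
      = ENNReal.ofReal (2 * r ^ ((1:ℝ)/2)) := by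
    have hint : IntegrableOn (fun u : ℝ => u ^ (-(1:ℝ)/2)) (Ioc 0 r) :=
      (intervalIntegrable_iff_integrableOn_Ioc_of_le hr.le).1
        (intervalIntegral.intervalIntegrable_rpow' (by norm_num))
    rw [setLIntegral_congr_fun (g := fun u => ENNReal.ofReal (u ^ (-(1:ℝ)/2))) measurableSet_Ioc
        (fun u hu => by simp only [abs_of_pos hu.1]),
      ← ofReal_integral_eq_lintegral_ofReal hint
        (ae_restrict_of_forall_mem measurableSet_Ioc fun u hu => Real.rpow_nonneg hu.1.le _),
      ← intervalIntegral.integral_of_le hr.le, integral_rpow (Or.inl (by norm_num))]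
    congr 1
    norm_num
    ring
  have hneg : ∫⁻ u in Ico (-r) 0, ENNReal.ofReal (|u| ^ (-(1:ℝ)/2))
      = ENNReal.ofReal (2 * r ^ ((1:ℝ)/2)) := by
    rw [← hpos, ← (Measure.measurePreserving_neg (volume : Measure ℝ)).setLIntegral_comp_preimage_emb
      (Homeomorph.neg ℝ).measurableEmbedding]
    simp
  have hsub : Ioo (-r) r ⊆ Ico (-r) 0 ∪ Icc 0 r := fun u hu => by
    rcases lt_or_ge u 0 with h | h
    · exact Or.inl ⟨hu.1.le, h⟩
    · exact Or.inr ⟨h, hu.2.le⟩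
  refine (lintegral_mono_set hsub).trans ((lintegral_union_le _ _ _).trans ?_)
  rw [hneg, setLIntegral_congr Ioc_ae_eq_Icc.symm, hpos, ← ENNReal.ofReal_add (by positivity)
    (by positivity)]
  apply ENNReal.ofReal_le_ofReal
  linarith

lemma heatKernel_sq_le {t : ℝ} (ht : 0 < t) (y : ℝ) :
    heatKernel t y ^ 2 ≤ t⁻¹ * Real.exp (-t⁻¹ * y ^ 2) := by
  have hexp : Real.exp (-y ^ 2 / (2 * t)) ^ 2 = Real.exp (-t⁻¹ * y ^ 2) := by
    rw [← Real.exp_nat_mul]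
    congr 1
    push_cast
    field_simp
  have hpow : ((2 * Real.pi * t) ^ (-(1:ℝ)/2)) ^ 2 = (2 * Real.pi * t)⁻¹ := by
    rw [← Real.rpow_natCast, ← Real.rpow_mul (by positivity), ← Real.rpow_neg_one]
    norm_num
  rw [heatKernel, mul_pow, hexp, hpow]
  gcongr
  nlinarith [Real.pi_gt_three]

lemma measurable_heatKernel (t : ℝ) : Measurable (heatKernel t) := by
  unfold heatKernel
  fun_prop

lemma lintegral_heatKernel_sq_mul_rpow_le {t : ℝ} (ht : 0 < t) (x : ℝ) :
    ∫⁻ y, ENNReal.ofReal (heatKernel t y ^ 2) * ENNReal.ofReal (|y - x| ^ (-(1:ℝ)/2))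
      ≤ ENNReal.ofReal (6 * t ^ (-(3:ℝ)/4)) := by
  set h : ℝ → ℝ≥0∞ := fun u => ENNReal.ofReal (|u| ^ (-(1:ℝ)/2)) with hh
  set S : Set ℝ := Ioo (-(t ^ ((1:ℝ)/2))) (t ^ ((1:ℝ)/2))
  have hr : 0 < t ^ ((1:ℝ)/2) := by positivity
  have hmeas : Measurable h := by fun_prop
  have hpt : ∀ y, ENNReal.ofReal (heatKernel t y ^ 2) * h (y - x)
      ≤ ENNReal.ofReal t⁻¹ * S.indicator h (y - x)
        + ENNReal.ofReal (t⁻¹ * t ^ (-(1:ℝ)/4)) * ENNReal.ofReal (Real.exp (-t⁻¹ * y ^ 2)) := by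
    intro y
    by_cases hy : y - x ∈ S
    · rw [indicator_of_mem hy]
      refine le_add_right ?_
      gcongr
      refine (heatKernel_sq_le ht y).trans (mul_le_of_le_one_right (by positivity) ?_)
      rw [Real.exp_le_one_iff, neg_mul, neg_nonpos]
      positivity
    · refine le_add_left ?_
      rw [hh, ← ENNReal.ofReal_mul (by positivity), ← ENNReal.ofReal_mul (by positivity)]
      apply ENNReal.ofReal_le_ofReal
      have hfar : t ^ ((1:ℝ)/2) ≤ |y - x| := by
        by_contra hlt
        exact hy (abs_lt.1 (not_le.1 hlt))
      have hpow : |y - x| ^ (-(1:ℝ)/2) ≤ t ^ (-(1:ℝ)/4) := by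
        refine (Real.rpow_le_rpow_of_nonpos hr hfar (by norm_num)).trans_eq ?_
        rw [← Real.rpow_mul ht.le]
        norm_num
      calc heatKernel t y ^ 2 * |y - x| ^ (-(1:ℝ)/2)
          ≤ t⁻¹ * Real.exp (-t⁻¹ * y ^ 2) * t ^ (-(1:ℝ)/4) := by
            gcongr
            exact heatKernel_sq_le ht y
        _ = _ := by ring
  have hnear : ∫⁻ y, S.indicator h (y - x) ≤ ENNReal.ofReal (4 * t ^ ((1:ℝ)/4)) := by
    rw [lintegral_sub_right_eq_self (S.indicator h) x, lintegral_indicator measurableSet_Ioo]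
    refine (lintegral_Ioo_abs_rpow_neg_half_le hr).trans_eq ?_
    rw [← Real.rpow_mul ht.le]
    norm_num
  have hgauss : ∫⁻ y, ENNReal.ofReal (Real.exp (-t⁻¹ * y ^ 2))
      ≤ ENNReal.ofReal (2 * t ^ ((1:ℝ)/2)) := by
    rw [← ofReal_integral_eq_lintegral_ofReal (integrable_exp_neg_mul_sq (inv_pos.2 ht))
      (ae_of_all _ fun y => (Real.exp_pos _).le), integral_gaussian, div_inv_eq_mul,
      Real.sqrt_mul Real.pi_pos.le, ← Real.sqrt_eq_rpow]
    apply ENNReal.ofReal_le_ofReal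
    gcongr
    rw [Real.sqrt_le_left (by norm_num)]
    linarith [Real.pi_le_four]
  refine (lintegral_mono hpt).trans ?_
  rw [lintegral_add_right _ (by fun_prop),
    lintegral_const_mul' _ _ ENNReal.ofReal_ne_top, lintegral_const_mul' _ _ ENNReal.ofReal_ne_top]
  refine (add_le_add (mul_le_mul_right hnear _) (mul_le_mul_right hgauss _)).trans_eq ?_
  rw [← ENNReal.ofReal_mul (by positivity), ← ENNReal.ofReal_mul (by positivity),
    ← ENNReal.ofReal_add (by positivity) (by positivity)]
  congr 1
  have h₁ : t⁻¹ * t ^ ((1:ℝ)/4) = t ^ (-(3:ℝ)/4) := by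
    rw [← Real.rpow_neg_one, ← Real.rpow_add ht]; norm_num
  have h₂ : t⁻¹ * t ^ (-(1:ℝ)/4) * t ^ ((1:ℝ)/2) = t ^ (-(3:ℝ)/4) := by
    rw [← Real.rpow_neg_one, ← Real.rpow_add ht, ← Real.rpow_add ht]; norm_num
  linear_combination 4 * h₁ + 2 * h₂

/-- The quantity inside the power dominates `s s' c (d - c)`, where `c ≤ d` are the ordered values
of `|y|, |y'|`. -/
lemma mul_min_mul_abs_sub_le {s s' : ℝ} (hs : 0 < s) (hs' : 0 < s') (y y' : ℝ) :
    s * s' * (min |y| |y'| * |(|y| - |y'|)|) ≤ s * s' * |y| * |y'| -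
      (min s s') ^ 2 * (min |y| |y'|) ^ 2 * (if 0 < y * y' then (1:ℝ) else 0) := by
  have hmin : (min s s') ^ 2 ≤ s * s' := by
    rw [sq]
    exact mul_le_mul (min_le_left _ _) (min_le_right _ _) (le_min hs.le hs'.le) hs.le
  have hite : (if 0 < y * y' then (1:ℝ) else 0) ≤ 1 := by split_ifs <;> norm_num
  have hite₀ : 0 ≤ (if 0 < y * y' then (1:ℝ) else 0) := by split_ifs <;> norm_num
  have hle : (min s s') ^ 2 * (min |y| |y'|) ^ 2 * (if 0 < y * y' then (1:ℝ) else 0)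
      ≤ s * s' * (min |y| |y'|) ^ 2 * 1 := by gcongr
  have heq : min |y| |y'| * |(|y| - |y'|)| + (min |y| |y'|) ^ 2 = |y| * |y'| := by
    rcases le_total |y| |y'| with h | h
    · rw [min_eq_left h, abs_of_nonpos (sub_nonpos.2 h)]; ring
    · rw [min_eq_right h, abs_of_nonneg (sub_nonneg.2 h)]; ring
  linear_combination hle + s * s' * heq

lemma rpow_neg_half_le_of_abs_ne {s s' y y' : ℝ} (hs : 0 < s) (hs' : 0 < s') (h₀ : y ≠ 0)
    (h₀' : y' ≠ 0) (hne : |y| ≠ |y'|) :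
    (s * s' * |y| * |y'| -
      (min s s') ^ 2 * (min |y| |y'|) ^ 2 * (if 0 < y * y' then (1:ℝ) else 0)) ^ (-(1:ℝ)/2)
    ≤ s ^ (-(1:ℝ)/2) * s' ^ (-(1:ℝ)/2) * ((|y| ^ (-(1:ℝ)/2) + |y'| ^ (-(1:ℝ)/2)) *
      (|y' - y| ^ (-(1:ℝ)/2) + |y' - -y| ^ (-(1:ℝ)/2))) := by
  have hc : 0 < min |y| |y'| := lt_min (abs_pos.2 h₀) (abs_pos.2 h₀')
  have hd : 0 < |(|y| - |y'|)| := abs_pos.2 (sub_ne_zero.2 hne)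
  refine (Real.rpow_le_rpow_of_nonpos (by positivity) (mul_min_mul_abs_sub_le hs hs' y y')
    (by norm_num)).trans ?_
  rw [Real.mul_rpow (by positivity) (by positivity), Real.mul_rpow hs.le hs'.le,
    Real.mul_rpow hc.le hd.le]
  have hmin : (min |y| |y'|) ^ (-(1:ℝ)/2) ≤ |y| ^ (-(1:ℝ)/2) + |y'| ^ (-(1:ℝ)/2) := by
    rcases min_choice |y| |y'| with h | h <;> rw [h]
    · exact le_add_of_nonneg_right (by positivity)
    · exact le_add_of_nonneg_left (by positivity)
  have hcases : |(|y| - |y'|)| = |y' - y| ∨ |(|y| - |y'|)| = |y' - -y| := by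
    rcases abs_cases y with ⟨e, _⟩ | ⟨e, _⟩ <;> rcases abs_cases y' with ⟨e', _⟩ | ⟨e', _⟩ <;>
      rw [e, e']
    · exact Or.inl (abs_sub_comm _ _)
    · exact Or.inr (by congr 1; ring)
    · exact Or.inr (by rw [abs_sub_comm])
    · exact Or.inl (by congr 1; ring)
  have hsub : |(|y| - |y'|)| ^ (-(1:ℝ)/2)
      ≤ |y' - y| ^ (-(1:ℝ)/2) + |y' - -y| ^ (-(1:ℝ)/2) := by
    rcases hcases with h | h <;> rw [h]
    · exact le_add_of_nonneg_right (by positivity)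
    · exact le_add_of_nonneg_left (by positivity)
  gcongr

/-- The spatial part of the integral, for fixed weights `G`, `G'` whose convolution with a kernel
`h` is bounded by `K`, `K'` respectively. -/
lemma lintegral_lintegral_mul_kernel_le {G G' h : ℝ → ℝ≥0∞} (hG : Measurable G)
    (hG' : Measurable G') (hh : Measurable h) (heven : ∀ u, h (-u) = h u) {K K' : ℝ≥0∞}
    (hK : ∀ x, ∫⁻ y, G y * h (y - x) ≤ K) (hK' : ∀ x, ∫⁻ y, G' y * h (y - x) ≤ K') :
    ∫⁻ y, ∫⁻ y', G y * G' y' * ((h y + h y') * (h (y' - y) + h (y' - -y))) ≤ 4 * (K * K') := by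
  have key : ∀ {F F' : ℝ → ℝ≥0∞} {L L' : ℝ≥0∞}, Measurable F → Measurable F' →
      (∀ x, ∫⁻ y, F y * h (y - x) ≤ L) → (∀ x, ∫⁻ y, F' y * h (y - x) ≤ L') →
      ∫⁻ y, ∫⁻ y', F y * F' y' * (h y * (h (y' - y) + h (y' - -y))) ≤ 2 * (L * L') := by
    intro F F' L L' hF hF' hL hL'
    calc ∫⁻ y, ∫⁻ y', F y * F' y' * (h y * (h (y' - y) + h (y' - -y)))
        = ∫⁻ y, F y * h y * (∫⁻ y', F' y' * h (y' - y) + F' y' * h (y' - -y)) := by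
          refine lintegral_congr fun y => ?_
          rw [← lintegral_const_mul _ (by fun_prop)]
          exact lintegral_congr fun y' => by ring
      _ ≤ ∫⁻ y, F y * h y * (2 * L') := by
          gcongr with y
          rw [lintegral_add_left (by fun_prop), two_mul]
          exact add_le_add (hL' y) (hL' (-y))
      _ = (∫⁻ y, F y * h (y - 0)) * (2 * L') := by
          simp_rw [sub_zero]
          exact lintegral_mul_const _ (by fun_prop)
      _ ≤ L * (2 * L') := by gcongr; exact hL 0
      _ = 2 * (L * L') := by ring
  have hsplit : ∀ y y', G y * G' y' * ((h y + h y') * (h (y' - y) + h (y' - -y)))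
      = G y * G' y' * (h y * (h (y' - y) + h (y' - -y)))
        + G' y' * G y * (h y' * (h (y - y') + h (y - -y'))) := by
    intro y y'
    rw [← heven (y - y'), neg_sub, sub_neg_eq_add, sub_neg_eq_add, add_comm y y']
    ring
  simp_rw [hsplit]
  rw [lintegral_congr fun y => lintegral_add_left (by fun_prop) _,
    lintegral_add_left (by fun_prop)]
  have hsecond := key hG' hG hK' hK
  rw [lintegral_lintegral_swap (by fun_prop)] at hsecond
  calc _ ≤ 2 * (K * K') + 2 * (K' * K) := add_le_add (key hG hG' hK hK') hsecond
    _ = 4 * (K * K') := by ring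

lemma lintegral_Ioo_rpow_mul_one_sub_rpow_lt_top {α β : ℝ} (hα : 0 < α) (hβ : 0 < β) :
    ∫⁻ x in Ioo (0:ℝ) 1, ENNReal.ofReal (x ^ (α - 1) * (1 - x) ^ (β - 1)) < ⊤ := by
  have hone := ProbabilityTheory.lintegral_betaPDF_eq_one hα hβ
  have hpos : 0 < 1 / ProbabilityTheory.beta α β :=
    one_div_pos.2 (ProbabilityTheory.beta_pos hα hβ)
  rw [ProbabilityTheory.lintegral_betaPDF] at hone
  simp_rw [mul_assoc, ENNReal.ofReal_mul hpos.le] at hone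
  rw [lintegral_const_mul _ (by fun_prop)] at hone
  refine lt_top_iff_ne_top.2 fun htop => ?_
  simp only [htop] at hone
  rw [ENNReal.mul_top (ENNReal.ofReal_pos.2 hpos).ne'] at hone
  exact ENNReal.top_ne_one hone

lemma lintegral_lintegral_density_le {s s' : ℝ} (hs : s ∈ Ioo (0:ℝ) 1) (hs' : s' ∈ Ioo (0:ℝ) 1) :
    (∫⁻ y : ℝ, ∫⁻ y' : ℝ,
      ENNReal.ofReal (heatKernel (1 - s) y ^ 2 * heatKernel (1 - s') y' ^ 2 *
        (2 * Real.pi)⁻¹ *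
        (s * s' * |y| * |y'| -
            (min s s') ^ 2 * (min |y| |y'|) ^ 2 * (if 0 < y * y' then (1:ℝ) else 0))
          ^ (-(1:ℝ)/2)))
      ≤ 144 * (ENNReal.ofReal (s ^ (-(1:ℝ)/2) * (1 - s) ^ (-(3:ℝ)/4)) *
        ENNReal.ofReal (s' ^ (-(1:ℝ)/2) * (1 - s') ^ (-(3:ℝ)/4))) := by
  set h : ℝ → ℝ≥0∞ := fun u => ENNReal.ofReal (|u| ^ (-(1:ℝ)/2)) with hh
  have hpi : (2 * Real.pi)⁻¹ ≤ 1 := inv_le_one_of_one_le₀ (by linarith [Real.pi_gt_three])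
  have hpt : ∀ᵐ y : ℝ, ∀ᵐ y' : ℝ,
      ENNReal.ofReal (heatKernel (1 - s) y ^ 2 * heatKernel (1 - s') y' ^ 2 *
        (2 * Real.pi)⁻¹ *
        (s * s' * |y| * |y'| -
            (min s s') ^ 2 * (min |y| |y'|) ^ 2 * (if 0 < y * y' then (1:ℝ) else 0))
          ^ (-(1:ℝ)/2))
      ≤ ENNReal.ofReal (s ^ (-(1:ℝ)/2) * s' ^ (-(1:ℝ)/2)) *
        (ENNReal.ofReal (heatKernel (1 - s) y ^ 2) * ENNReal.ofReal (heatKernel (1 - s') y' ^ 2) *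
          ((h y + h y') * (h (y' - y) + h (y' - -y)))) := by
    filter_upwards [Measure.ae_ne volume (0:ℝ)] with y h₀
    filter_upwards [Measure.ae_ne volume (0:ℝ), Measure.ae_ne volume y,
      Measure.ae_ne volume (-y)] with y' h₀' h₁ h₂
    have hs₀ := hs.1
    have hs₀' := hs'.1
    have hne : |y| ≠ |y'| := fun e => by
      rcases abs_eq_abs.1 e with e | e
      · exact h₁ e.symm
      · exact h₂ (by rw [e, neg_neg])
    simp only [hh]
    rw [← ENNReal.ofReal_add (by positivity) (by positivity),
      ← ENNReal.ofReal_add (by positivity) (by positivity),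
      ← ENNReal.ofReal_mul (by positivity), ← ENNReal.ofReal_mul (by positivity),
      ← ENNReal.ofReal_mul (by positivity), ← ENNReal.ofReal_mul (by positivity)]
    apply ENNReal.ofReal_le_ofReal
    calc _ ≤ heatKernel (1 - s) y ^ 2 * heatKernel (1 - s') y' ^ 2 * 1 * _ := by
            refine mul_le_mul (by gcongr) (rpow_neg_half_le_of_abs_ne hs₀ hs₀' h₀ h₀' hne)
              (Real.rpow_nonneg (le_trans (by positivity)
                (mul_min_mul_abs_sub_le hs₀ hs₀' y y')) _) (by positivity)
      _ = _ := by ring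
  have heven : ∀ u, h (-u) = h u := fun u => by simp only [hh, abs_neg]
  have hspace := lintegral_lintegral_mul_kernel_le
    ((measurable_heatKernel (1 - s)).pow_const 2).ennreal_ofReal
    ((measurable_heatKernel (1 - s')).pow_const 2).ennreal_ofReal
    (h := h) (by fun_prop) heven
    (lintegral_heatKernel_sq_mul_rpow_le (sub_pos.2 hs.2))
    (lintegral_heatKernel_sq_mul_rpow_le (sub_pos.2 hs'.2))
  refine (lintegral_mono_ae (hpt.mono fun y hy => lintegral_mono_ae hy)).trans ?_
  simp_rw [lintegral_const_mul' _ _ ENNReal.ofReal_ne_top]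
  refine (mul_le_mul_right hspace _).trans_eq ?_
  have hs₀ := hs.1.le
  have hs₀' := hs'.1.le
  rw [ENNReal.ofReal_mul (by positivity), ENNReal.ofReal_mul (by positivity),
    ENNReal.ofReal_mul (by positivity), ENNReal.ofReal_mul (by positivity),
    ENNReal.ofReal_mul (by positivity), ENNReal.ofReal_ofNat]
  ring

/-- The integral
`I = ∫₀¹∫₀¹∫_ℝ∫_ℝ p_{1-s}(y)² p_{1-s'}(y')² (2π)⁻¹
  (s s' |y| |y'| - (min(s,s'))² (min(|y|,|y'|))² 𝟙_{yy'>0})^{-1/2} dy dy' ds ds'`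
is finite. -/
theorem integral_density_bound_finite :
    (∫⁻ s in Ioo (0:ℝ) 1, ∫⁻ s' in Ioo (0:ℝ) 1, ∫⁻ y : ℝ, ∫⁻ y' : ℝ,
      ENNReal.ofReal (heatKernel (1 - s) y ^ 2 * heatKernel (1 - s') y' ^ 2 *
        (2 * Real.pi)⁻¹ *
        (s * s' * |y| * |y'| -
            (min s s') ^ 2 * (min |y| |y'|) ^ 2 * (if 0 < y * y' then (1:ℝ) else 0))
          ^ (-(1:ℝ)/2))) < ⊤ := by
  refine (setLIntegral_mono' measurableSet_Ioo fun s hs =>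
    setLIntegral_mono' measurableSet_Ioo fun s' hs' =>
      lintegral_lintegral_density_le hs hs').trans_lt ?_
  have hbeta : ∫⁻ s in Ioo (0:ℝ) 1, ENNReal.ofReal (s ^ (-(1:ℝ)/2) * (1 - s) ^ (-(3:ℝ)/4)) < ⊤ := by
    convert lintegral_Ioo_rpow_mul_one_sub_rpow_lt_top (α := 1/2) (β := 1/4) (by norm_num)
      (by norm_num) using 6 <;> norm_num
  simp_rw [lintegral_const_mul' _ _ (ENNReal.ofNat_ne_top (n := 144)),
    lintegral_const_mul' _ _ ENNReal.ofReal_ne_top]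
  rw [lintegral_mul_const _ (by fun_prop)]
  exact ENNReal.mul_lt_top (by finiteness) (ENNReal.mul_lt_top hbeta hbeta)
end

section
/- For every δ with 0 < δ < 1/4, the integral ∫_{0<s<s′<1} ∫_{0<z<z′<∞} (1−s)^{−1+δ} (1−s′)^{−1} s^{−1+2δ} (s′)^{−1} z^{−1/2−2δ} (z′−z)^{−1/2} exp( −z′² / ( s′² (1−s′) ) ) dz dz′ ds ds′ is finite. -/
open MeasureTheory Filter Set

theorem lintegral_rpow_mul_exp_neg_sq_div {A q : ℝ} (hA : 0 < A) (hq : -1 < q) :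
    ∫⁻ x in Ioi (0 : ℝ), ENNReal.ofReal (x ^ q * Real.exp (-x ^ 2 / A)) =
      ENNReal.ofReal (A ^ ((q + 1) / 2) * (Real.Gamma ((q + 1) / 2) / 2)) := by
  have hexp (x : ℝ) : -x ^ 2 / A = -A⁻¹ * x ^ 2 := by ring
  simp_rw [hexp]
  rw [← ofReal_integral_eq_lintegral_ofReal
    (integrableOn_rpow_mul_exp_neg_mul_sq (inv_pos.2 hA) hq)]
  · have h := integral_rpow_mul_exp_neg_mul_rpow two_pos hq (inv_pos.2 hA)
    simp_rw [Real.rpow_two] at h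
    rw [h, Real.inv_rpow hA.le, ← Real.rpow_neg hA.le]
    ring_nf
  · refine ae_restrict_of_forall_mem measurableSet_Ioi fun x hx ↦ ?_
    exact mul_nonneg (Real.rpow_nonneg (le_of_lt hx) _) (Real.exp_pos _).le

theorem setLIntegral_Ioi_comp_sub_right (f : ℝ → ENNReal) (z : ℝ) :
    ∫⁻ x in Ioi z, f (x - z) = ∫⁻ x in Ioi (0 : ℝ), f x := by
  rw [← (measurePreserving_sub_right volume z).setLIntegral_comp_preimage_emb
    (MeasurableEquiv.subRight z).measurableEmbedding f (Ioi 0)]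
  simp

theorem lintegral_rpow_mul_sub_rpow_mul_exp_le {A p q : ℝ} (hA : 0 < A) (hp : -1 < p)
    (hq : -1 < q) :
    ∫⁻ z in Ioi (0 : ℝ), ∫⁻ z' in Ioi z,
        ENNReal.ofReal (z ^ p * (z' - z) ^ q * Real.exp (-z' ^ 2 / A)) ≤
      ENNReal.ofReal (Real.Gamma ((p + 1) / 2) / 2 * (Real.Gamma ((q + 1) / 2) / 2) *
        A ^ ((p + 1) / 2 + (q + 1) / 2)) := by
  have hΓ : 0 ≤ A ^ ((q + 1) / 2) * (Real.Gamma ((q + 1) / 2) / 2) :=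
    mul_nonneg (Real.rpow_nonneg hA.le _)
      (div_nonneg (Real.Gamma_pos_of_pos (by linarith)).le zero_le_two)
  calc
    _ ≤ ∫⁻ z in Ioi (0 : ℝ), ∫⁻ z' in Ioi z, ENNReal.ofReal (z ^ p * Real.exp (-z ^ 2 / A)) *
          ENNReal.ofReal ((z' - z) ^ q * Real.exp (-(z' - z) ^ 2 / A)) := by
      refine setLIntegral_mono' measurableSet_Ioi fun z (hz : 0 < z) ↦
        setLIntegral_mono' measurableSet_Ioi fun z' (hz' : z < z') ↦ ?_
      have hzp : 0 ≤ z ^ p := Real.rpow_nonneg hz.le _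
      have hzq : 0 ≤ (z' - z) ^ q := Real.rpow_nonneg (sub_pos.2 hz').le _
      rw [← ENNReal.ofReal_mul (mul_nonneg hzp (Real.exp_pos _).le)]
      refine ENNReal.ofReal_le_ofReal ?_
      rw [mul_mul_mul_comm, ← Real.exp_add, ← add_div]
      gcongr
      nlinarith [mul_pos hz (sub_pos.2 hz')]
    _ = ∫⁻ z in Ioi (0 : ℝ), ENNReal.ofReal (z ^ p * Real.exp (-z ^ 2 / A)) *
          ENNReal.ofReal (A ^ ((q + 1) / 2) * (Real.Gamma ((q + 1) / 2) / 2)) := by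
      refine lintegral_congr fun z ↦ ?_
      rw [lintegral_const_mul' _ _ ENNReal.ofReal_ne_top, setLIntegral_Ioi_comp_sub_right
        (fun w ↦ ENNReal.ofReal (w ^ q * Real.exp (-w ^ 2 / A))),
        lintegral_rpow_mul_exp_neg_sq_div hA hq]
    _ = _ := by
      rw [lintegral_mul_const' _ _ ENNReal.ofReal_ne_top,
        lintegral_rpow_mul_exp_neg_sq_div hA hp, ← ENNReal.ofReal_mul' hΓ, Real.rpow_add hA]
      ring_nf

theorem lintegral_rpow_mul_one_sub_rpow_lt_top {a b : ℝ} (ha : -1 < a) (hb : -1 < b) :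
    ∫⁻ x in Ioo (0 : ℝ) 1, ENNReal.ofReal (x ^ a * (1 - x) ^ b) < ⊤ := by
  have hβ := ProbabilityTheory.beta_pos (neg_lt_iff_pos_add.1 ha) (neg_lt_iff_pos_add.1 hb)
  have h := ProbabilityTheory.lintegral_betaPDF_eq_one (neg_lt_iff_pos_add.1 ha)
    (neg_lt_iff_pos_add.1 hb)
  simp_rw [ProbabilityTheory.lintegral_betaPDF, add_sub_cancel_right, mul_assoc,
    ENNReal.ofReal_mul (one_div_pos.2 hβ).le] at h
  rw [lintegral_const_mul' _ _ ENNReal.ofReal_ne_top] at h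
  refine lt_top_iff_ne_top.2 fun htop ↦ ?_
  rw [htop, ENNReal.mul_top (ENNReal.ofReal_pos.2 (one_div_pos.2 hβ)).ne'] at h
  exact ENNReal.top_ne_one h

/-- For every `0 < δ < 1/4`, the integral
`∫_{0<s<s'<1} ∫_{0<z<z'<∞} (1-s)^{-1+δ} (1-s')⁻¹ s^{-1+2δ} s'⁻¹ z^{-1/2-2δ} (z'-z)^{-1/2}
  exp(-z'²/(s'²(1-s'))) dz dz' ds ds'` is finite. -/
theorem integral_delta_finite (δ : ℝ) (hδ0 : 0 < δ) (hδ : δ < 1/4) :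
    (∫⁻ s in Ioo (0:ℝ) 1, ∫⁻ s' in Ioo s 1, ∫⁻ z in Ioi (0:ℝ), ∫⁻ z' in Ioi z,
      ENNReal.ofReal ((1 - s) ^ (-1 + δ) * (1 - s')⁻¹ * s ^ (-1 + 2*δ) * s'⁻¹ *
        z ^ (-(1:ℝ)/2 - 2*δ) * (z' - z) ^ (-(1:ℝ)/2) *
        Real.exp (-z' ^ 2 / (s' ^ 2 * (1 - s'))))) < ⊤ := by
  set K : ℝ := Real.Gamma ((-(1 : ℝ) / 2 - 2 * δ + 1) / 2) / 2 *
    (Real.Gamma ((-(1 : ℝ) / 2 + 1) / 2) / 2)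
  have inner_le {s s' : ℝ} (hs : s ∈ Ioo (0 : ℝ) 1) (hs' : s' ∈ Ioo s 1) :
      ∫⁻ z in Ioi (0 : ℝ), ∫⁻ z' in Ioi z,
        ENNReal.ofReal ((1 - s) ^ (-1 + δ) * (1 - s')⁻¹ * s ^ (-1 + 2*δ) * s'⁻¹ *
          z ^ (-(1:ℝ)/2 - 2*δ) * (z' - z) ^ (-(1:ℝ)/2) *
          Real.exp (-z' ^ 2 / (s' ^ 2 * (1 - s')))) ≤
      ENNReal.ofReal (s ^ (-1 + 2 * δ) * (1 - s) ^ (-1 + δ)) * (ENNReal.ofReal K *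
        ENNReal.ofReal (s' ^ (-2 * δ) * (1 - s') ^ (-(1 : ℝ) / 2 - δ))) := by
    have h1s : 0 < 1 - s := sub_pos.2 hs.2
    have h1s' : 0 < 1 - s' := sub_pos.2 hs'.2
    have hs0 : 0 < s := hs.1
    have hs0' : 0 < s' := hs0.trans hs'.1
    have hA : 0 < s' ^ 2 * (1 - s') := by positivity
    have hS : 0 ≤ s ^ (-1 + 2 * δ) * (1 - s) ^ (-1 + δ) := by positivity
    have hc : 0 ≤ s ^ (-1 + 2 * δ) * (1 - s) ^ (-1 + δ) * ((1 - s')⁻¹ * s'⁻¹) := by positivity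
    have hpow : (1 - s')⁻¹ * s'⁻¹ * (s' ^ 2 * (1 - s')) ^
          ((-(1 : ℝ) / 2 - 2 * δ + 1) / 2 + (-(1 : ℝ) / 2 + 1) / 2) =
        s' ^ (-2 * δ) * (1 - s') ^ (-(1 : ℝ) / 2 - δ) := by
      rw [Real.mul_rpow (by positivity) h1s'.le, ← Real.rpow_natCast_mul hs0'.le,
        ← Real.rpow_neg_one, ← Real.rpow_neg_one, mul_comm (_ ^ (-1 : ℝ)),
        mul_mul_mul_comm, ← Real.rpow_add hs0', ← Real.rpow_add h1s']
      push_cast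
      ring_nf
    calc
      _ = ∫⁻ z in Ioi (0 : ℝ), ∫⁻ z' in Ioi z,
          ENNReal.ofReal (s ^ (-1 + 2 * δ) * (1 - s) ^ (-1 + δ) * ((1 - s')⁻¹ * s'⁻¹)) *
          ENNReal.ofReal (z ^ (-(1:ℝ)/2 - 2*δ) * (z' - z) ^ (-(1:ℝ)/2) *
            Real.exp (-z' ^ 2 / (s' ^ 2 * (1 - s')))) := by
        simp_rw [← ENNReal.ofReal_mul hc]
        refine lintegral_congr fun z ↦ lintegral_congr fun z' ↦ congrArg _ ?_
        ring
      _ ≤ ENNReal.ofReal (s ^ (-1 + 2 * δ) * (1 - s) ^ (-1 + δ) * ((1 - s')⁻¹ * s'⁻¹)) *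
          ENNReal.ofReal (K * (s' ^ 2 * (1 - s')) ^
            ((-(1 : ℝ) / 2 - 2 * δ + 1) / 2 + (-(1 : ℝ) / 2 + 1) / 2)) := by
        simp_rw [lintegral_const_mul' _ _ ENNReal.ofReal_ne_top]
        gcongr
        exact lintegral_rpow_mul_sub_rpow_mul_exp_le hA (by linarith) (by norm_num)
      _ = _ := by
        rw [← ENNReal.ofReal_mul hc, ← ENNReal.ofReal_mul' (by positivity),
          ← ENNReal.ofReal_mul hS, ← hpow]
        ring_nf
  calc
    _ ≤ ∫⁻ s in Ioo (0 : ℝ) 1, ENNReal.ofReal (s ^ (-1 + 2 * δ) * (1 - s) ^ (-1 + δ)) *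
        (ENNReal.ofReal K * ∫⁻ s' in Ioo (0 : ℝ) 1,
          ENNReal.ofReal (s' ^ (-2 * δ) * (1 - s') ^ (-(1 : ℝ) / 2 - δ))) := by
      refine setLIntegral_mono' measurableSet_Ioo fun s hs ↦ ?_
      refine (setLIntegral_mono' measurableSet_Ioo fun s' hs' ↦ inner_le hs hs').trans ?_
      rw [lintegral_const_mul' _ _ ENNReal.ofReal_ne_top,
        lintegral_const_mul' _ _ ENNReal.ofReal_ne_top]
      gcongr
      exact hs.1.le
    _ < ⊤ := by
      have hs' : ENNReal.ofReal K * ∫⁻ s' in Ioo (0 : ℝ) 1,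
          ENNReal.ofReal (s' ^ (-2 * δ) * (1 - s') ^ (-(1 : ℝ) / 2 - δ)) < ⊤ :=
        ENNReal.mul_lt_top ENNReal.ofReal_lt_top
          (lintegral_rpow_mul_one_sub_rpow_lt_top (by linarith) (by linarith))
      rw [lintegral_mul_const' _ _ hs'.ne]
      exact ENNReal.mul_lt_top
        (lintegral_rpow_mul_one_sub_rpow_lt_top (by linarith) (by linarith)) hs'
end

section
/- For every x ∈ ℝ and every r ∈ (0,1], one has lim_{t→∞} ∫₀ʳ ∫_ℝ | p_{1−s}( x/√t − y )² − p_{1−s}(y)² | · ( s |y| )^{−1/2} dy ds = 0. -/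
open MeasureTheory Filter Set

/-- The square of the heat kernel is a Gaussian with an explicit prefactor. -/
lemma heatKernel_sq {τ : ℝ} (hτ : 0 < τ) (y : ℝ) :
    heatKernel τ y ^ 2 = (2 * Real.pi * τ)⁻¹ * Real.exp (-y ^ 2 / τ) := by
  have h : 0 ≤ 2 * Real.pi * τ := by positivity
  rw [heatKernel, mul_pow, ← Real.rpow_natCast, ← Real.rpow_mul h, ← Real.exp_nat_mul]
  congr 1
  · rw [← Real.rpow_neg_one]
    norm_num
  · congr 1
    push_cast
    field_simp

lemma integral_indicator_Ioc_rpow_abs {c : ℝ} (hc : 0 < c) :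
    ∫ y : ℝ, (Ioc 0 c).indicator (fun z : ℝ => z ^ (-(1 : ℝ) / 2)) |y| =
      4 * c ^ ((1 : ℝ) / 2) := by
  rw [integral_comp_abs, setIntegral_indicator measurableSet_Ioc,
    inter_eq_self_of_subset_right Ioc_subset_Ioi_self, ← intervalIntegral.integral_of_le hc.le,
    integral_rpow (Or.inl (by norm_num)), Real.zero_rpow (by norm_num)]
  norm_num
  ring

lemma integrable_indicator_Ioc_rpow_abs {c : ℝ} (hc : 0 < c) :
    Integrable fun y : ℝ => (Ioc 0 c).indicator (fun z : ℝ => z ^ (-(1 : ℝ) / 2)) |y| := by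
  by_contra h
  have := integral_indicator_Ioc_rpow_abs hc
  rw [integral_undef h] at this
  have : 0 < c ^ ((1 : ℝ) / 2) := by positivity
  linarith

lemma integrable_exp_neg_sub_sq_div {τ : ℝ} (hτ : 0 < τ) (a : ℝ) :
    Integrable fun y : ℝ => Real.exp (-(a - y) ^ 2 / τ) := by
  convert (integrable_exp_neg_mul_sq (inv_pos.2 hτ)).comp_sub_left a using 3
  ring

lemma integral_exp_neg_sub_sq_div (τ a : ℝ) :
    ∫ y : ℝ, Real.exp (-(a - y) ^ 2 / τ) = √(Real.pi * τ) := by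
  have h := integral_sub_left_eq_self (fun y : ℝ => Real.exp (-τ⁻¹ * y ^ 2)) volume a
  rw [integral_gaussian, div_inv_eq_mul] at h
  rw [← h]
  congr 1 with y
  congr 1
  ring

lemma exp_mul_abs_rpow_le {τ : ℝ} (hτ : 0 < τ) (a y : ℝ) :
    Real.exp (-(a - y) ^ 2 / τ) * |y| ^ (-(1 : ℝ) / 2) ≤
      (Ioc 0 (τ ^ ((1 : ℝ) / 2))).indicator (fun z : ℝ => z ^ (-(1 : ℝ) / 2)) |y| +
        τ ^ (-(1 : ℝ) / 4) * Real.exp (-(a - y) ^ 2 / τ) := by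
  have hexp : Real.exp (-(a - y) ^ 2 / τ) ≤ 1 := by
    rw [Real.exp_le_one_iff, neg_div]
    exact neg_nonpos.2 (by positivity)
  rcases eq_or_ne y 0 with rfl | hy
  · rw [abs_zero, Real.zero_rpow (by norm_num)]
    simp only [mem_Ioc, lt_self_iff_false, false_and, not_false_eq_true, indicator_of_notMem]
    rw [mul_zero, zero_add]
    positivity
  have hy' : 0 < |y| := abs_pos.2 hy
  by_cases h : |y| ≤ τ ^ ((1 : ℝ) / 2)
  · rw [indicator_of_mem (show |y| ∈ Ioc 0 (τ ^ ((1 : ℝ) / 2)) from ⟨hy', h⟩)]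
    have h₁ := mul_le_of_le_one_left (Real.rpow_nonneg hy'.le (-(1 : ℝ) / 2)) hexp
    have h₂ : 0 ≤ τ ^ (-(1 : ℝ) / 4) * Real.exp (-(a - y) ^ 2 / τ) := by positivity
    linarith
  · rw [indicator_of_notMem (fun hm => h hm.2), zero_add, mul_comm]
    gcongr
    have h₁ := Real.rpow_le_rpow_of_nonpos (by positivity) (not_le.1 h).le
      (show -(1 : ℝ) / 2 ≤ 0 by norm_num)
    rw [← Real.rpow_mul hτ.le] at h₁
    norm_num at h₁ ⊢
    exact h₁

lemma integrable_exp_mul_abs_rpow {τ : ℝ} (hτ : 0 < τ) (a : ℝ) :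
    Integrable fun y : ℝ => Real.exp (-(a - y) ^ 2 / τ) * |y| ^ (-(1 : ℝ) / 2) := by
  refine ((integrable_indicator_Ioc_rpow_abs (Real.rpow_pos_of_pos hτ ((1 : ℝ) / 2))).add
    ((integrable_exp_neg_sub_sq_div hτ a).const_mul (τ ^ (-(1 : ℝ) / 4)))).mono'
    (Measurable.aestronglyMeasurable (by fun_prop)) (ae_of_all _ fun y => ?_)
  rw [Real.norm_of_nonneg (by positivity)]
  exact exp_mul_abs_rpow_le hτ a y

/-- Shifted Gaussians integrate against `|y|^{-1/2}` to at most a constant times `τ^{1/4}`,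
uniformly in the shift. -/
lemma integral_exp_mul_abs_rpow_le {τ : ℝ} (hτ : 0 < τ) (a : ℝ) :
    ∫ y : ℝ, Real.exp (-(a - y) ^ 2 / τ) * |y| ^ (-(1 : ℝ) / 2) ≤
      (4 + √Real.pi) * τ ^ ((1 : ℝ) / 4) := by
  have hi := integrable_indicator_Ioc_rpow_abs (Real.rpow_pos_of_pos hτ ((1 : ℝ) / 2))
  have hg := (integrable_exp_neg_sub_sq_div hτ a).const_mul (τ ^ (-(1 : ℝ) / 4))
  refine (integral_mono (integrable_exp_mul_abs_rpow hτ a) (hi.add hg)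
    (exp_mul_abs_rpow_le hτ a)).trans_eq ?_
  simp only [Pi.add_apply]
  rw [integral_add hi hg, integral_const_mul, integral_exp_neg_sub_sq_div,
    integral_indicator_Ioc_rpow_abs (by positivity), ← Real.rpow_mul hτ.le,
    Real.sqrt_mul Real.pi_pos.le, Real.sqrt_eq_rpow τ]
  have h : τ ^ ((1 : ℝ) / 4) = τ ^ (-(1 : ℝ) / 4) * τ ^ ((1 : ℝ) / 2) := by
    rw [← Real.rpow_add hτ]
    norm_num
  rw [show (1 : ℝ) / 2 * (1 / 2) = 1 / 4 by norm_num, add_mul]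
  nth_rewrite 3 [h]
  ring

lemma exp_neg_sub_sq_div_le {τ a x : ℝ} (hτ : 0 < τ) (ha : |a| ≤ |x|) (y : ℝ) :
    Real.exp (-(a - y) ^ 2 / τ) ≤
      Real.exp (x ^ 2 / τ) * Real.exp (-(0 - y) ^ 2 / (2 * τ)) := by
  rw [← Real.exp_add, Real.exp_le_exp]
  have h := sq_le_sq.2 ha
  have : x ^ 2 / τ + -(0 - y) ^ 2 / (2 * τ) - -(a - y) ^ 2 / τ =
      (2 * x ^ 2 - y ^ 2 + 2 * (a - y) ^ 2) / (2 * τ) := by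
    field_simp
    ring
  have h' : 0 ≤ (2 * x ^ 2 - y ^ 2 + 2 * (a - y) ^ 2) / (2 * τ) := by
    apply div_nonneg _ (by positivity)
    nlinarith [sq_nonneg (y - 2 * a)]
  linarith

lemma abs_heatKernel_sq_sub_mul_eq {τ s : ℝ} (hτ : 0 < τ) (hs : 0 < s) (a y : ℝ) :
    |heatKernel τ (a - y) ^ 2 - heatKernel τ y ^ 2| * (s * |y|) ^ (-(1 : ℝ) / 2) =
      ((2 * Real.pi * τ)⁻¹ * s ^ (-(1 : ℝ) / 2)) *
        (|Real.exp (-(a - y) ^ 2 / τ) - Real.exp (-(0 - y) ^ 2 / τ)| *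
          |y| ^ (-(1 : ℝ) / 2)) := by
  rw [heatKernel_sq hτ, heatKernel_sq hτ, ← mul_sub, abs_mul,
    abs_of_pos (show 0 < (2 * Real.pi * τ)⁻¹ by positivity),
    Real.mul_rpow hs.le (abs_nonneg y), zero_sub, neg_sq]
  ring

lemma abs_exp_sub_exp_mul_le (u v y : ℝ) :
    |Real.exp u - Real.exp v| * |y| ^ (-(1 : ℝ) / 2) ≤
      Real.exp u * |y| ^ (-(1 : ℝ) / 2) + Real.exp v * |y| ^ (-(1 : ℝ) / 2) := by
  rw [← add_mul]
  gcongr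
  rw [abs_le]
  constructor <;> linarith [Real.exp_pos u, Real.exp_pos v]

lemma integral_abs_heatKernel_sq_sub_le {τ s : ℝ} (hτ : 0 < τ) (hs : 0 < s) (a : ℝ) :
    ∫ y : ℝ, |heatKernel τ (a - y) ^ 2 - heatKernel τ y ^ 2| * (s * |y|) ^ (-(1 : ℝ) / 2) ≤
      ((4 + √Real.pi) / Real.pi) * (s ^ (-(1 : ℝ) / 2) * τ ^ (-(3 : ℝ) / 4)) := by
  simp_rw [abs_heatKernel_sq_sub_mul_eq hτ hs a]
  rw [integral_const_mul]
  have h : ∫ y : ℝ, |Real.exp (-(a - y) ^ 2 / τ) - Real.exp (-(0 - y) ^ 2 / τ)| *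
      |y| ^ (-(1 : ℝ) / 2) ≤ 2 * ((4 + √Real.pi) * τ ^ ((1 : ℝ) / 4)) := by
    have ha := integrable_exp_mul_abs_rpow hτ a
    have h0 := integrable_exp_mul_abs_rpow hτ 0
    refine (integral_mono_of_nonneg (ae_of_all _ fun y => by positivity) (ha.add h0)
      (ae_of_all _ fun y => abs_exp_sub_exp_mul_le _ _ y)).trans ?_
    simp only [Pi.add_apply]
    rw [integral_add ha h0]
    linarith [integral_exp_mul_abs_rpow_le hτ a, integral_exp_mul_abs_rpow_le hτ 0]
  refine (mul_le_mul_of_nonneg_left h (by positivity)).trans_eq ?_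
  have hpow : τ ^ (-(3 : ℝ) / 4) = τ⁻¹ * τ ^ ((1 : ℝ) / 4) := by
    rw [← Real.rpow_neg_one, ← Real.rpow_add hτ]
    norm_num
  rw [hpow]
  field_simp

lemma tendsto_integral_abs_heatKernel_sq_sub {τ s : ℝ} (hτ : 0 < τ) (hs : 0 < s) (x : ℝ) :
    Tendsto (fun t : ℝ => ∫ y : ℝ,
        |heatKernel τ (x / √t - y) ^ 2 - heatKernel τ y ^ 2| * (s * |y|) ^ (-(1 : ℝ) / 2))
      atTop (nhds 0) := by
  simp_rw [abs_heatKernel_sq_sub_mul_eq hτ hs, integral_const_mul]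
  rw [show nhds (0 : ℝ) = nhds ((2 * Real.pi * τ)⁻¹ * s ^ (-(1 : ℝ) / 2) * ∫ _ : ℝ, (0 : ℝ)) by
    rw [integral_zero, mul_zero]]
  refine Tendsto.const_mul _ (tendsto_integral_filter_of_dominated_convergence
    (fun y => Real.exp (x ^ 2 / τ) *
        (Real.exp (-(0 - y) ^ 2 / (2 * τ)) * |y| ^ (-(1 : ℝ) / 2)) +
      Real.exp (-(0 - y) ^ 2 / τ) * |y| ^ (-(1 : ℝ) / 2))
    (Eventually.of_forall fun t => Measurable.aestronglyMeasurable (by fun_prop)) ?_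
    (((integrable_exp_mul_abs_rpow (by positivity) 0).const_mul _).add
      (integrable_exp_mul_abs_rpow hτ 0)) (ae_of_all _ fun y => ?_))
  · filter_upwards [eventually_ge_atTop 1] with t ht
    refine ae_of_all _ fun y => ?_
    rw [Real.norm_of_nonneg (by positivity)]
    refine (abs_exp_sub_exp_mul_le _ _ y).trans ?_
    rw [← mul_assoc]
    gcongr
    refine exp_neg_sub_sq_div_le hτ ?_ y
    rw [abs_div, abs_of_nonneg (Real.sqrt_nonneg t)]
    exact div_le_self (abs_nonneg x) (Real.one_le_sqrt.2 ht)
  · have hlim : Tendsto (fun t : ℝ => x / √t) atTop (nhds 0) :=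
      tendsto_const_nhds.div_atTop Real.tendsto_sqrt_atTop
    have hcont : Continuous fun a : ℝ =>
        |Real.exp (-(a - y) ^ 2 / τ) - Real.exp (-(0 - y) ^ 2 / τ)| *
          |y| ^ (-(1 : ℝ) / 2) := by
      fun_prop
    simpa [Function.comp_def] using (hcont.tendsto 0).comp hlim

lemma integrableOn_rpow_mul_one_sub_rpow :
    IntegrableOn (fun s : ℝ => s ^ (-(1 : ℝ) / 2) * (1 - s) ^ (-(3 : ℝ) / 4)) (Ioo 0 1) := by
  have h := (intervalIntegrable_iff_integrableOn_Ioo_of_le zero_le_one).1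
    (Complex.betaIntegral_convergent (u := ((1 / 2 : ℝ) : ℂ)) (v := ((1 / 4 : ℝ) : ℂ))
      (by simp) (by simp))
  refine h.norm.congr ((ae_restrict_mem measurableSet_Ioo).mono fun s hs => ?_)
  have hs' : 0 < 1 - s := sub_pos.2 hs.2
  simp only [norm_mul]
  rw [← Complex.ofReal_one]
  simp only [← Complex.ofReal_sub]
  rw [Complex.norm_cpow_eq_rpow_re_of_pos hs.1, Complex.norm_cpow_eq_rpow_re_of_pos hs',
    Complex.ofReal_re, Complex.ofReal_re]
  norm_num

/-- For every `x ∈ ℝ` and `r ∈ (0,1]`,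
`lim_{t→∞} ∫₀ʳ ∫_ℝ |p_{1-s}(x/√t - y)² - p_{1-s}(y)²| (s|y|)^{-1/2} dy ds = 0`. -/
theorem tendsto_integral_abs_diff (x r : ℝ) (hr0 : 0 < r) (hr1 : r ≤ 1) :
    Tendsto (fun t : ℝ => ∫ s in Ioo (0:ℝ) r, ∫ y : ℝ,
        |heatKernel (1 - s) (x / Real.sqrt t - y) ^ 2 - heatKernel (1 - s) y ^ 2| *
          (s * |y|) ^ (-(1:ℝ)/2))
      atTop (nhds 0) := by
  rw [show nhds (0 : ℝ) = nhds (∫ _ in Ioo (0 : ℝ) r, (0 : ℝ)) by rw [integral_zero]]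
  refine tendsto_integral_filter_of_dominated_convergence
    (fun s => ((4 + √Real.pi) / Real.pi) * (s ^ (-(1 : ℝ) / 2) * (1 - s) ^ (-(3 : ℝ) / 4)))
    (Eventually.of_forall fun t => ?_) (Eventually.of_forall fun t => ?_)
    ((integrableOn_rpow_mul_one_sub_rpow.mono_set (Ioo_subset_Ioo_right hr1)).const_mul _) ?_
  · refine (StronglyMeasurable.integral_prod_right ?_).aestronglyMeasurable
    refine Measurable.stronglyMeasurable ?_
    unfold heatKernel Function.uncurry
    fun_prop
  · filter_upwards [ae_restrict_mem measurableSet_Ioo] with s hs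
    have hτ : 0 < 1 - s := by linarith [hs.2]
    have hs0 : 0 < s := hs.1
    rw [Real.norm_of_nonneg (integral_nonneg fun y => by positivity)]
    exact integral_abs_heatKernel_sq_sub_le hτ hs0 _
  · filter_upwards [ae_restrict_mem measurableSet_Ioo] with s hs
    exact tendsto_integral_abs_heatKernel_sq_sub (by linarith [hs.2]) hs.1 x
end

section
/- For every α ≥ 0, every t₀ > 0 and every x ∈ ℝ, one has lim_{t→∞} ∫₀^{t₀/t} ∫_ℝ p_{1−s}( x/√t − y )² · ( s |y| )^α dy ds = 0. -/
open MeasureTheory Filter Set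

theorem heatKernel_nonneg {t : ℝ} (ht : 0 ≤ t) (x : ℝ) : 0 ≤ heatKernel t x := by
  unfold heatKernel
  positivity

theorem heatKernel_sq_le_exp {t : ℝ} (ht : 1 / 2 ≤ t) (ht' : t ≤ 1) (x : ℝ) :
    heatKernel t x ^ 2 ≤ Real.exp (-x ^ 2) := by
  have hpos : 0 < t := by linarith
  have hbase : 1 ≤ 2 * Real.pi * t := by nlinarith [Real.pi_gt_three]
  have hexp : -x ^ 2 / (2 * t) ≤ -x ^ 2 / 2 := by
    rw [div_le_div_iff₀ (by positivity) (by positivity)]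
    nlinarith [sq_nonneg x]
  have hle : heatKernel t x ≤ Real.exp (-x ^ 2 / 2) := by
    unfold heatKernel
    calc _ ≤ 1 * Real.exp (-x ^ 2 / 2) := by
          gcongr
          exact Real.rpow_le_one_of_one_le_of_nonpos hbase (by norm_num)
      _ = _ := one_mul _
  calc heatKernel t x ^ 2 ≤ Real.exp (-x ^ 2 / 2) ^ 2 :=
        pow_le_pow_left₀ (heatKernel_nonneg hpos.le x) hle 2
    _ = Real.exp (-x ^ 2) := by
        rw [← Real.exp_nat_mul]
        congr 1
        push_cast
        ring

theorem integrable_abs_rpow_mul_exp_neg_mul_sq {b : ℝ} (hb : 0 < b) {a : ℝ} (ha : 0 ≤ a) :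
    Integrable fun y : ℝ => |y| ^ a * Real.exp (-b * y ^ 2) := by
  have hpow : Integrable fun y : ℝ => y ^ (⌈a⌉₊ : ℝ) * Real.exp (-b * y ^ 2) :=
    integrable_rpow_mul_exp_neg_mul_sq hb (by linarith [Nat.cast_nonneg (α := ℝ) ⌈a⌉₊])
  refine ((integrable_exp_neg_mul_sq hb).add hpow.norm).mono' ?_ (Eventually.of_forall fun y => ?_)
  · fun_prop
  · have hle : |y| ^ a ≤ 1 + |y| ^ ⌈a⌉₊ := by
      rcases le_total |y| 1 with h | h
      · linarith [Real.rpow_le_one (abs_nonneg y) h ha, pow_nonneg (abs_nonneg y) ⌈a⌉₊]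
      · have := Real.rpow_le_rpow_of_exponent_le h (Nat.le_ceil a)
        rw [Real.rpow_natCast] at this
        linarith
    rw [Real.norm_of_nonneg (by positivity)]
    simp only [Pi.add_apply, norm_mul, Real.rpow_natCast, norm_pow, Real.norm_eq_abs, Real.abs_exp]
    calc _ ≤ (1 + |y| ^ ⌈a⌉₊) * Real.exp (-b * y ^ 2) := by gcongr
      _ = _ := by ring

theorem heatKernel_sq_mul_rpow_le {α s z x : ℝ} (hα : 0 ≤ α) (hs : 0 ≤ s) (hs' : s ≤ 1 / 2)
    (hz : z ^ 2 ≤ x ^ 2) (y : ℝ) :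
    heatKernel (1 - s) (z - y) ^ 2 * (s * |y|) ^ α ≤
      Real.exp (x ^ 2) * (|y| ^ α * Real.exp (-(1 / 2) * y ^ 2)) := by
  have hker : heatKernel (1 - s) (z - y) ^ 2 ≤ Real.exp (x ^ 2 + -(1 / 2) * y ^ 2) :=
    (heatKernel_sq_le_exp (by linarith) (by linarith) _).trans
      (Real.exp_le_exp.2 (by nlinarith [sq_nonneg (2 * z - y)]))
  have hpow : (s * |y|) ^ α ≤ |y| ^ α := by
    gcongr
    exact mul_le_of_le_one_left (abs_nonneg y) (by linarith)
  calc _ ≤ Real.exp (x ^ 2 + -(1 / 2) * y ^ 2) * |y| ^ α := by gcongr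
    _ = _ := by rw [Real.exp_add]; ring

/-- For every `α ≥ 0`, `t₀ > 0` and `x ∈ ℝ`,
`lim_{t→∞} ∫₀^{t₀/t} ∫_ℝ p_{1-s}(x/√t - y)² (s|y|)^α dy ds = 0`. -/
theorem tendsto_integral_small_time (α : ℝ) (hα : 0 ≤ α) (t₀ : ℝ) (ht₀ : 0 < t₀) (x : ℝ) :
    Tendsto (fun t : ℝ => ∫ s in Ioo (0:ℝ) (t₀ / t), ∫ y : ℝ,
        heatKernel (1 - s) (x / Real.sqrt t - y) ^ 2 * (s * |y|) ^ α)
      atTop (nhds 0) := by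
  have hint : Integrable fun y : ℝ =>
      Real.exp (x ^ 2) * (|y| ^ α * Real.exp (-(1 / 2) * y ^ 2)) :=
    (integrable_abs_rpow_mul_exp_neg_mul_sq (by norm_num) hα).const_mul _
  set C : ℝ := ∫ y : ℝ, Real.exp (x ^ 2) * (|y| ^ α * Real.exp (-(1 / 2) * y ^ 2))
  have hlim : Tendsto (fun t : ℝ => C * (t₀ / t)) atTop (nhds 0) := by
    simpa using (tendsto_const_nhds.div_atTop tendsto_id : Tendsto (fun t : ℝ => t₀ / t)
      atTop (nhds 0)).const_mul C
  refine squeeze_zero_norm' ?_ hlim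
  filter_upwards [eventually_ge_atTop 1, eventually_ge_atTop (2 * t₀)] with t ht1 ht
  have htpos : 0 < t := by linarith
  have hhalf : t₀ / t ≤ 1 / 2 := by
    rw [div_le_div_iff₀ htpos two_pos]
    linarith
  have hz : (x / Real.sqrt t) ^ 2 ≤ x ^ 2 := by
    rw [div_pow, Real.sq_sqrt htpos.le]
    exact div_le_self (sq_nonneg x) ht1
  have hvol : volume.real (Ioo (0:ℝ) (t₀ / t)) = t₀ / t := by
    rw [Real.volume_real_Ioo_of_le (by positivity), sub_zero]
  refine (norm_setIntegral_le_of_norm_le_const (C := C) measure_Ioo_lt_top fun s hs => ?_).trans_eq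
    (by rw [hvol])
  refine norm_integral_le_of_norm_le hint (Eventually.of_forall fun y => ?_)
  have hs0 : 0 ≤ s := hs.1.le
  rw [Real.norm_of_nonneg (by positivity)]
  exact heatKernel_sq_mul_rpow_le hα hs0 (hs.2.le.trans hhalf) hz y
end
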